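/- arXiv:1904.10867 — 2 statements merged into one kernel-verified Lean document; each statement's English description precedes it below -/
import Mathlib

section
/- For every natural number n ≥ 1, binom(2n, n) = 2 · Σ_{m=1}^{n} C_{m−1} · binom(2(n−m), n−m), where C_k = binom(2k,k)/(k+1) is the k-th Catalan number. -/
/-!
Put `D = X C`, where `C` is the Catalan series. Since `(n + 1) Cₙ = Bₙ`, the central binomial series
is the derivative `B = D'`. The Catalan functional equation reads `D = X (1 + C D)`, i.e.
`D = X + D²`, and differentiating it gives `B = 1 + 2 X C B`, the subtraction-free form of
`B = 1 / (1 - 2 X C)`. The claim is its coefficient at `Xⁿ`, `n ≥ 1`.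
-/

open PowerSeries Finset

/-- The generating function `∑ₙ binom(2n, n) Xⁿ` of the central binomial coefficients, with
coefficients in `ℕ` to match Mathlib's `PowerSeries.catalanSeries`. -/
def centralBinomSeries : ℕ⟦X⟧ := PowerSeries.mk Nat.centralBinom

theorem coeff_centralBinomSeries (n : ℕ) : coeff n centralBinomSeries = n.centralBinom :=
  coeff_mk n _

theorem derivative_X_mul_catalanSeries :
    d⁄dX ℕ (X * catalanSeries) = centralBinomSeries := by
  ext n
  rw [coeff_derivative, coeff_succ_X_mul, catalanSeries_coeff, coeff_centralBinomSeries,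
    ← succ_mul_catalan_eq_centralBinom, mul_comm, Nat.cast_id]

theorem X_mul_catalanSeries_eq_X_add_sq :
    X * catalanSeries = X + (X * catalanSeries) ^ 2 := by
  nth_rw 1 [← catalanSeries_sq_mul_X_add_one]
  ring

theorem centralBinomSeries_eq_one_add_two_mul :
    centralBinomSeries = 1 + 2 * (X * catalanSeries) * centralBinomSeries := by
  calc centralBinomSeries
      = d⁄dX ℕ (X + (X * catalanSeries) ^ 2) := by
        rw [← X_mul_catalanSeries_eq_X_add_sq, derivative_X_mul_catalanSeries]
    _ = 1 + 2 * (X * catalanSeries) * centralBinomSeries := by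
        rw [map_add, derivative_X, derivative_pow, derivative_X_mul_catalanSeries]
        simp only [Nat.cast_ofNat, Nat.add_one_sub_one, pow_one]

theorem centralBinom_succ_eq_two_mul_sum_antidiagonal (n : ℕ) :
    (n + 1).centralBinom =
      2 * ∑ ij ∈ antidiagonal n, catalan ij.1 * ij.2.centralBinom := by
  calc (n + 1).centralBinom
      = coeff (n + 1) (1 + 2 * (X * catalanSeries) * centralBinomSeries) := by
        rw [← centralBinomSeries_eq_one_add_two_mul, coeff_centralBinomSeries]
    _ = 2 * coeff n (catalanSeries * centralBinomSeries) := by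
        rw [map_add, coeff_one, if_neg n.succ_ne_zero, zero_add, mul_assoc, mul_assoc, two_mul,
          map_add, coeff_succ_X_mul, ← two_mul]
    _ = 2 * ∑ ij ∈ antidiagonal n, catalan ij.1 * ij.2.centralBinom := by
        simp only [coeff_mul, catalanSeries_coeff, coeff_centralBinomSeries]

theorem centralBinom_first_passage (n : ℕ) (hn : 1 ≤ n) :
    Nat.choose (2 * n) n =
      2 * ∑ m ∈ Finset.Icc 1 n, catalan (m - 1) * Nat.choose (2 * (n - m)) (n - m) := by
  obtain ⟨k, rfl⟩ := Nat.exists_eq_add_of_le' hn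
  simp only [← Nat.centralBinom_eq_two_mul_choose]
  have reindex : ∑ ij ∈ antidiagonal k, catalan ij.1 * ij.2.centralBinom =
      ∑ m ∈ Icc 1 (k + 1), catalan (m - 1) * (k + 1 - m).centralBinom := by
    rw [Nat.sum_antidiagonal_eq_sum_range_succ (fun i j ↦ catalan i * j.centralBinom),
      range_eq_Ico, ← Ico_add_one_right_eq_Icc, ← sum_Ico_add' _ 0 (k + 1) 1]
    simp only [Nat.add_sub_cancel, Nat.add_sub_add_right]
  rw [centralBinom_succ_eq_two_mul_sum_antidiagonal, reindex]
end

section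
/- Define, for N ≥ 2, E_N = B_N^{−1} · Σ_{k=0}^{N−1} v_{N,k} · (2k+1)^{1/2}, where B_N = binom(2N,N), C_k = binom(2k,k)/(k+1), and v_{N,k} = C_k · (4^{N−k−1} + ((N−k)/2) · B_{N−k}). Then the limit as N → ∞ of E_N / (N · log N) equals 1/√(2π). -/
/-- `v N k = C_k (4^(N-k-1) + ((N-k)/2) B_{N-k})`. -/
noncomputable def dyckEdgeCount (N k : ℕ) : ℝ :=
  (catalan k : ℝ) *
    (4 ^ (N - k - 1) + ((N : ℝ) - (k : ℝ)) / 2 * (Nat.choose (2 * (N - k)) (N - k) : ℝ))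

/-- Average cost of the Dyck matching in the uniform-spacings model at `p = 1/2`. -/
noncomputable def dyckCostUShalf (N : ℕ) : ℝ :=
  ((Nat.choose (2 * N) N : ℝ))⁻¹ *
    ∑ k ∈ Finset.range N,
      dyckEdgeCount N k * (2 * (k : ℝ) + 1) ^ ((1 : ℝ) / 2)

/-!
Write `b_n = B_n / 4^n` and `w_n = 1/4 + n b_n / 2`. Then `v_{N,k} = 4^N b_k w_{N-k} / (k + 1)`, so
`E_N = b_N⁻¹ ∑_{k<N} w_{N-k} u_k / (k + 1)` with `u_k = √(2k+1) b_k`, and Wallis' product gives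
`u_k → √(2/π)`. Because `w_n` increases while `w_n / n` decreases, replacing `w_{N-k}` by `w_N`
costs at most a fraction `k/N` of `w_N`. The total error is `O(w_N)`, negligible against
`w_N log N`. What remains is the logarithmic mean of `u`, so `E_N ~ (w_N / b_N) √(2/π) log N`, and
`w_N / b_N ~ N / 2`.
-/

section LogarithmicMeans

open Filter Finset Real Topology

variable {E : Type*} [NormedAddCommGroup E] [NormedSpace ℝ E] {u : ℕ → E} {l : E} {w : ℕ → ℝ}

theorem tendsto_inv_sum_smul_sum {g : ℕ → ℝ} (hg : 0 ≤ g)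
    (hg_top : Tendsto (fun n ↦ ∑ k ∈ range n, g k) atTop atTop) (hu : Tendsto u atTop (𝓝 l)) :
    Tendsto (fun n ↦ (∑ k ∈ range n, g k)⁻¹ • ∑ k ∈ range n, g k • u k) atTop (𝓝 l) := by
  have h_term : (fun k ↦ g k • (u k - l)) =o[atTop] g := by
    simpa only [smul_eq_mul, mul_one] using (Asymptotics.isBigO_refl g atTop).smul_isLittleO
      ((Asymptotics.isLittleO_one_iff ℝ).2 (tendsto_sub_nhds_zero_iff.2 hu))
  have h_sum := (h_term.sum_range hg hg_top).tendsto_inv_smul_nhds_zero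
  rw [← tendsto_sub_nhds_zero_iff]
  refine h_sum.congr' ?_
  filter_upwards [hg_top.eventually_ne_atTop 0] with n hn
  simp only [smul_sub, sum_sub_distrib, ← sum_smul]
  rw [inv_smul_smul₀ hn]

theorem tendsto_log_natCast_atTop : Tendsto (fun n : ℕ ↦ log n) atTop atTop :=
  tendsto_log_atTop.comp tendsto_natCast_atTop_atTop

theorem tendsto_sum_range_inv_div_log :
    Tendsto (fun n : ℕ ↦ (∑ k ∈ range n, ((k : ℝ) + 1)⁻¹) / log n) atTop (𝓝 1) := by
  have h := (tendsto_harmonic_sub_log.div_atTop tendsto_log_natCast_atTop).add_const 1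
  rw [zero_add] at h
  refine h.congr' ?_
  filter_upwards [tendsto_log_natCast_atTop.eventually_ne_atTop 0] with n hn
  simp only [harmonic, Rat.cast_sum, Rat.cast_inv, Nat.cast_add_one, Rat.cast_add,
    Rat.cast_natCast, Rat.cast_one]
  field_simp
  ring

theorem tendsto_inv_log_smul_sum (hu : Tendsto u atTop (𝓝 l)) :
    Tendsto (fun n : ℕ ↦ (log n)⁻¹ • ∑ k ∈ range n, ((k : ℝ) + 1)⁻¹ • u k) atTop (𝓝 l) := by
  have h_top : Tendsto (fun n : ℕ ↦ ∑ k ∈ range n, ((k : ℝ) + 1)⁻¹) atTop atTop := by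
    simpa only [one_div] using tendsto_sum_range_one_div_nat_succ_atTop
  have h_mean := tendsto_inv_sum_smul_sum (fun k ↦ by positivity) h_top hu
  have h := tendsto_sum_range_inv_div_log.smul h_mean
  rw [one_smul] at h
  refine h.congr' ?_
  filter_upwards [h_top.eventually_ne_atTop 0] with n hn
  rw [smul_smul, div_mul_eq_mul_div, mul_inv_cancel₀ hn, one_div]

theorem abs_sub_le_div_mul_of_monotone (hw_mono : Monotone w)
    (hw_mul : ∀ ⦃m n : ℕ⦄, m ≤ n → m * w n ≤ n * w m) {k n : ℕ} (hkn : k < n) :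
    |w (n - k) - w n| ≤ k / n * w n := by
  have hn : (0 : ℝ) < n := Nat.cast_pos.2 (Nat.zero_lt_of_lt hkn)
  have h := hw_mul (Nat.sub_le n k)
  rw [Nat.cast_sub hkn.le] at h
  rw [abs_sub_comm, abs_of_nonneg (sub_nonneg.2 (hw_mono (Nat.sub_le n k))), div_mul_eq_mul_div,
    le_div_iff₀ hn]
  linarith

theorem norm_sum_div_smul_sub_le (hw_mono : Monotone w)
    (hw_mul : ∀ ⦃m n : ℕ⦄, m ≤ n → m * w n ≤ n * w m) {C : ℝ} (hC : ∀ k, ‖u k‖ ≤ C) (n : ℕ) :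
    ‖∑ k ∈ range n, (w (n - k) / (k + 1)) • u k - w n • ∑ k ∈ range n, ((k : ℝ) + 1)⁻¹ • u k‖
      ≤ C * w n := by
  have hw : 0 ≤ w n := by
    have h := hw_mul (Nat.zero_le 1)
    rw [Nat.cast_zero, zero_mul, Nat.cast_one, one_mul] at h
    exact h.trans (hw_mono (Nat.zero_le n))
  have hC0 : 0 ≤ C := (norm_nonneg (u 0)).trans (hC 0)
  have h_term : ∀ k ∈ range n, ‖((w (n - k) - w n) / (k + 1)) • u k‖ ≤ C * w n / n := by
    intro k hk
    have h_abs := abs_sub_le_div_mul_of_monotone hw_mono hw_mul (mem_range.1 hk)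
    calc ‖((w (n - k) - w n) / (k + 1)) • u k‖
        = |w (n - k) - w n| / (k + 1) * ‖u k‖ := by
          rw [norm_smul, norm_div, norm_eq_abs, norm_of_nonneg (by positivity : (0 : ℝ) ≤ k + 1)]
      _ ≤ k / n * w n / (k + 1) * C := by gcongr; exact hC k
      _ = k / (k + 1) * (C * w n / n) := by ring
      _ ≤ C * w n / n :=
          mul_le_of_le_one_left (by positivity) (div_le_one_of_le₀ (by linarith) (by positivity))
  calc ‖∑ k ∈ range n, (w (n - k) / (k + 1)) • u k - w n • ∑ k ∈ range n, ((k : ℝ) + 1)⁻¹ • u k‖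
      = ‖∑ k ∈ range n, ((w (n - k) - w n) / (k + 1)) • u k‖ := by
        simp only [smul_sum, smul_smul, ← sum_sub_distrib, ← sub_smul, div_eq_mul_inv, sub_mul]
    _ ≤ ∑ _k ∈ range n, C * w n / n := norm_sum_le_of_le _ h_term
    _ = n / n * (C * w n) := by
        rw [sum_const, card_range, nsmul_eq_mul, mul_div_left_comm, mul_comm]
    _ ≤ C * w n := mul_le_of_le_one_left (by positivity) (div_self_le_one _)

theorem tendsto_inv_mul_log_smul_convolution (hw_mono : Monotone w)
    (hw_mul : ∀ ⦃m n : ℕ⦄, m ≤ n → m * w n ≤ n * w m) (hw_pos : ∀ᶠ n in atTop, 0 < w n)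
    (hu : Tendsto u atTop (𝓝 l)) :
    Tendsto (fun n : ℕ ↦ (w n * log n)⁻¹ • ∑ k ∈ range n, (w (n - k) / (k + 1)) • u k)
      atTop (𝓝 l) := by
  obtain ⟨C, hC⟩ := hu.norm.bddAbove_range
  have h_bound : ∀ k, ‖u k‖ ≤ C := fun k ↦ hC ⟨k, rfl⟩
  have h_error : Tendsto (fun n : ℕ ↦ (w n * log n)⁻¹ •
      (∑ k ∈ range n, (w (n - k) / (k + 1)) • u k - w n • ∑ k ∈ range n, ((k : ℝ) + 1)⁻¹ • u k))
      atTop (𝓝 0) := by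
    refine squeeze_zero_norm' ?_
      ((tendsto_const_nhds (x := C)).div_atTop tendsto_log_natCast_atTop)
    filter_upwards [hw_pos, tendsto_log_natCast_atTop.eventually_gt_atTop 0] with n hw h_log
    rw [norm_smul, norm_of_nonneg (by positivity), inv_mul_le_iff₀ (by positivity)]
    refine (norm_sum_div_smul_sub_le hw_mono hw_mul h_bound n).trans_eq ?_
    field_simp
  have h := h_error.add (tendsto_inv_log_smul_sum hu)
  rw [zero_add] at h
  refine h.congr' ?_
  filter_upwards [hw_pos] with n hw
  rw [smul_sub, smul_smul, mul_inv, mul_right_comm, inv_mul_cancel₀ hw.ne', one_mul, sub_add_cancel]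

end LogarithmicMeans

section CentralBinomial

open Filter Finset Real Topology

/-- The central binomial coefficient rescaled by its exponential growth rate, `B_n / 4^n`: the
probability that a simple random walk on `ℤ` is at its starting point after `2n` steps. -/
noncomputable def normalizedCentralBinom (n : ℕ) : ℝ := n.centralBinom / 4 ^ n

theorem normalizedCentralBinom_pos (n : ℕ) : 0 < normalizedCentralBinom n :=
  div_pos (Nat.cast_pos.2 n.centralBinom_pos) (by positivity)

theorem choose_two_mul_eq_normalizedCentralBinom_mul (n : ℕ) :
    ((2 * n).choose n : ℝ) = normalizedCentralBinom n * 4 ^ n := by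
  rw [normalizedCentralBinom, div_mul_cancel₀ _ (by positivity), Nat.centralBinom_eq_two_mul_choose]

theorem catalan_eq_normalizedCentralBinom_mul_div (n : ℕ) :
    (catalan n : ℝ) = normalizedCentralBinom n * 4 ^ n / (n + 1) := by
  rw [normalizedCentralBinom, div_mul_cancel₀ _ (by positivity), eq_div_iff (by positivity),
    mul_comm]
  exact_mod_cast succ_mul_catalan_eq_centralBinom n

theorem add_one_mul_normalizedCentralBinom_add_one (n : ℕ) :
    (n + 1) * normalizedCentralBinom (n + 1) = (n + 1 / 2) * normalizedCentralBinom n := by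
  have h : ((n : ℝ) + 1) * (n + 1).centralBinom = 2 * (2 * n + 1) * n.centralBinom := by
    exact_mod_cast Nat.succ_mul_centralBinom_succ n
  rw [normalizedCentralBinom, normalizedCentralBinom, pow_succ]
  field_simp
  linarith

theorem antitone_normalizedCentralBinom : Antitone normalizedCentralBinom := by
  refine antitone_nat_of_succ_le fun n ↦ ?_
  have h := add_one_mul_normalizedCentralBinom_add_one n
  have h_pos := normalizedCentralBinom_pos n
  refine le_of_mul_le_mul_left ?_ (by positivity : (0 : ℝ) < n + 1)
  linarith

theorem normalizedCentralBinom_sq_mul_wallis (n : ℕ) :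
    normalizedCentralBinom n ^ 2 * (2 * n + 1) * Wallis.W n = 1 := by
  have h_fact : ((2 * n).factorial : ℝ) = n.centralBinom * n.factorial * n.factorial := by
    have h := Nat.choose_mul_factorial_mul_factorial (Nat.le_mul_of_pos_left n two_pos)
    rw [← Nat.centralBinom_eq_two_mul_choose, two_mul, Nat.add_sub_cancel, ← two_mul] at h
    exact_mod_cast h.symm
  have h_binom : (n.centralBinom : ℝ) ≠ 0 := Nat.cast_ne_zero.2 n.centralBinom_ne_zero
  have h_pow : (2 : ℝ) ^ (4 * n) = (4 ^ n) ^ 2 := by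
    rw [← pow_mul, mul_comm n, pow_mul, pow_mul]
    norm_num
  rw [Wallis.W_eq_factorial_ratio, h_fact, h_pow, normalizedCentralBinom]
  field_simp

theorem sqrt_mul_normalizedCentralBinom (n : ℕ) :
    √(2 * n + 1) * normalizedCentralBinom n = √(Wallis.W n)⁻¹ := by
  have h_sq : (√(2 * n + 1) * normalizedCentralBinom n) ^ 2 = (Wallis.W n)⁻¹ := by
    rw [mul_pow, sq_sqrt (by positivity), mul_comm]
    exact eq_inv_of_mul_eq_one_left (normalizedCentralBinom_sq_mul_wallis n)
  rw [← h_sq, sqrt_sq (mul_nonneg (sqrt_nonneg _) (normalizedCentralBinom_pos n).le)]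

theorem tendsto_sqrt_mul_normalizedCentralBinom :
    Tendsto (fun n : ℕ ↦ √(2 * n + 1) * normalizedCentralBinom n) atTop (𝓝 √(2 / π)) := by
  simp only [sqrt_mul_normalizedCentralBinom, ← inv_div π 2]
  exact (Wallis.tendsto_W_nhds_pi_div_two.inv₀ (by positivity)).sqrt

theorem tendsto_mul_normalizedCentralBinom_atTop :
    Tendsto (fun n : ℕ ↦ n * normalizedCentralBinom n) atTop atTop := by
  have h_lin : Tendsto (fun n : ℕ ↦ 2 * (n : ℝ) + 1) atTop atTop :=
    tendsto_atTop_add_const_right _ _ (tendsto_natCast_atTop_atTop.const_mul_atTop two_pos)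
  have h := (tendsto_sqrt_mul_normalizedCentralBinom.pos_mul_atTop (by positivity)
    (tendsto_sqrt_atTop.comp h_lin)).atTop_div_const three_pos
  refine tendsto_atTop_mono' _ ?_ h
  filter_upwards [eventually_ge_atTop 1] with n hn
  have hn : (1 : ℝ) ≤ n := Nat.one_le_cast.2 hn
  have h_pos := normalizedCentralBinom_pos n
  calc √(2 * n + 1) * normalizedCentralBinom n * √(2 * n + 1) / 3
      = (2 * n + 1) / 3 * normalizedCentralBinom n := by
        rw [mul_right_comm, mul_self_sqrt (by positivity), mul_div_right_comm]
    _ ≤ n * normalizedCentralBinom n := by gcongr; linarith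

end CentralBinomial

section DyckCost

open Filter Finset Real Topology

/-- The factor `w_n` in `v_{N,k} = C_k 4^(N-k) w_{N-k}`. Splitting off the power of `4` leaves a
weight that grows only like `√n`. -/
noncomputable def dyckEdgeWeight (n : ℕ) : ℝ := 1 / 4 + n / 2 * normalizedCentralBinom n

theorem dyckEdgeWeight_pos (n : ℕ) : 0 < dyckEdgeWeight n := by
  have h_pos := normalizedCentralBinom_pos n
  rw [dyckEdgeWeight]
  positivity

theorem monotone_dyckEdgeWeight : Monotone dyckEdgeWeight := by
  refine monotone_nat_of_le_succ fun n ↦ ?_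
  have h := add_one_mul_normalizedCentralBinom_add_one n
  have h_pos := normalizedCentralBinom_pos n
  rw [dyckEdgeWeight, dyckEdgeWeight, Nat.cast_add_one]
  linarith

theorem mul_dyckEdgeWeight_le ⦃m n : ℕ⦄ (hmn : m ≤ n) :
    m * dyckEdgeWeight n ≤ n * dyckEdgeWeight m := by
  have h_cast : (m : ℝ) ≤ n := Nat.cast_le.2 hmn
  calc m * dyckEdgeWeight n = m / 4 + m * n / 2 * normalizedCentralBinom n := by
        rw [dyckEdgeWeight]; ring
    _ ≤ n / 4 + m * n / 2 * normalizedCentralBinom m := by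
        gcongr; exact antitone_normalizedCentralBinom hmn
    _ = n * dyckEdgeWeight m := by rw [dyckEdgeWeight]; ring

theorem tendsto_dyckEdgeWeight_div :
    Tendsto (fun n : ℕ ↦ dyckEdgeWeight n / (n * normalizedCentralBinom n)) atTop (𝓝 (1 / 2)) := by
  have h := ((tendsto_const_nhds (x := (1 / 4 : ℝ))).div_atTop
    tendsto_mul_normalizedCentralBinom_atTop).add_const (1 / 2)
  rw [zero_add] at h
  refine h.congr' ?_
  filter_upwards [tendsto_mul_normalizedCentralBinom_atTop.eventually_ne_atTop 0] with n hn
  rw [dyckEdgeWeight, add_div, div_mul_eq_mul_div, div_right_comm _ (2 : ℝ), div_self hn]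

theorem dyckEdgeCount_eq {N k : ℕ} (hk : k < N) :
    dyckEdgeCount N k =
      4 ^ N * (dyckEdgeWeight (N - k) / (k + 1) * normalizedCentralBinom k) := by
  obtain ⟨m, rfl⟩ : ∃ m, N = k + (m + 1) := ⟨N - k - 1, by lia⟩
  rw [dyckEdgeCount, dyckEdgeWeight, catalan_eq_normalizedCentralBinom_mul_div,
    choose_two_mul_eq_normalizedCentralBinom_mul, Nat.add_sub_cancel_left, Nat.add_sub_cancel,
    pow_add, pow_succ, Nat.cast_add]
  ring

theorem dyckCostUShalf_eq (N : ℕ) :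
    dyckCostUShalf N = (normalizedCentralBinom N)⁻¹ * ∑ k ∈ range N,
      dyckEdgeWeight (N - k) / (k + 1) * (√(2 * k + 1) * normalizedCentralBinom k) := by
  rw [dyckCostUShalf, choose_two_mul_eq_normalizedCentralBinom_mul, mul_inv, mul_assoc, mul_sum]
  congr 1
  refine sum_congr rfl fun k hk ↦ ?_
  rw [dyckEdgeCount_eq (mem_range.1 hk), ← sqrt_eq_rpow]
  field_simp

end DyckCost

theorem dyckCostUS_leading_half :
    Filter.Tendsto
      (fun N : ℕ => dyckCostUShalf N / ((N : ℝ) * Real.log N))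
      Filter.atTop
      (nhds (1 / Real.sqrt (2 * Real.pi))) := by
  have h_mean := tendsto_inv_mul_log_smul_convolution monotone_dyckEdgeWeight mul_dyckEdgeWeight_le
    (.of_forall dyckEdgeWeight_pos) tendsto_sqrt_mul_normalizedCentralBinom
  have h_const : 1 / 2 * √(2 / Real.pi) = 1 / √(2 * Real.pi) := by
    rw [show 2 * Real.pi = 2 ^ 2 * (Real.pi / 2) by ring, Real.sqrt_mul (by positivity),
      Real.sqrt_sq zero_le_two, ← inv_div Real.pi 2, Real.sqrt_inv, ← one_div, one_div_mul_one_div]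
  rw [← h_const]
  refine (tendsto_dyckEdgeWeight_div.mul h_mean).congr fun N ↦ ?_
  have h_ne := (dyckEdgeWeight_pos N).ne'
  simp only [dyckCostUShalf_eq, smul_eq_mul]
  generalize Finset.sum (M := ℝ) (Finset.range N) _ = S
  field_simp
end
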